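/- For every integer q, the DFnT matrix satisfies the chirp–permutation identity Φ_N D_N^q Φ_N^H = α_q D_N^q Π_N^q, where α_q = exp(i(π/N)·q·((N mod 2) − q)). -/

import Mathlib

open Matrix Complex

/-- The `N × N` discrete Fresnel transform (DFnT) matrix `Φ_N`, with entries
`[Φ_N]_{m,n} = (1/√N) · exp(−iπ/4 + i(π/N)(m − n + (N mod 2)/2)²)`. -/
noncomputable def dfnt (N : ℕ) : Matrix (Fin N) (Fin N) ℂ :=
  Matrix.of fun m n : Fin N =>
    (1 / (Real.sqrt N : ℂ)) *
      Complex.exp (-((Real.pi : ℂ) / 4) * Complex.I +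
        ((Real.pi : ℂ) / N) * Complex.I *
          (((m : ℕ) : ℂ) - ((n : ℕ) : ℂ) + ((N % 2 : ℕ) : ℂ) / 2) ^ 2)

/-- The `q`-th integer power `D_K^q` of the diagonal matrix
`D_K = diag(1, e^{2πi/K}, …, e^{2πi(K−1)/K})`: its `k`-th diagonal entry is `e^{2πiqk/K}`. -/
noncomputable def Dzpow (K : ℕ) (q : ℤ) : Matrix (Fin K) (Fin K) ℂ :=
  Matrix.diagonal fun k : Fin K =>
    Complex.exp (2 * (Real.pi : ℂ) * Complex.I * (q : ℂ) * ((k : ℕ) : ℂ) / (K : ℂ))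

/-- The `q`-th integer power `Π_K^q` of the cyclic shift permutation matrix `Π_K`
(`[Π_K]_{m,n} = 1` iff `m ≡ n+1 (mod K)`): `[Π_K^q]_{m,n} = 1` iff `m ≡ n + q (mod K)`. -/
def Pzpow (K : ℕ) (q : ℤ) : Matrix (Fin K) (Fin K) ℂ :=
  Matrix.of fun m n : Fin K =>
    if (((m : ℕ) : ℤ) - ((n : ℕ) : ℤ) - q) % (K : ℤ) = 0 then 1 else 0

/-- `α_q = exp(i(π/N)·q·((N mod 2) − q))`. -/
noncomputable def alphaCoef (N : ℕ) (q : ℤ) : ℂ :=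
  Complex.exp (Complex.I * ((Real.pi : ℂ) / N) * (q : ℂ) * (((N % 2 : ℕ) : ℂ) - (q : ℂ)))

/-!
Expanding the squares gives `Φ_{m,k} conj Φ_{n,k} = N⁻¹ c(m) conj c(n) ω^{(n - m) k}`, where
`ω = e^{2πi/N}` and `c(j) = exp(iπ j (j + (N mod 2)) / N)` is a unimodular chirp. Summing against
`ω^{qk}` leaves only the entries with `m ≡ n + q (mod N)`: `Φ D^q Φᴴ = C Π^q Cᴴ` with `C = diag c`.
The offset `N mod 2` makes `c` periodic modulo `N`, and `c(j) = α_q ω^{qj} c(j - q)`, so that moving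
`C` across `Π^q` produces exactly `α_q D^q`.
-/

theorem sum_fin_zpow_pow_of_isPrimitiveRoot {K : Type*} [Field K] {ζ : K} {N : ℕ}
    (hζ : IsPrimitiveRoot ζ N) (s : ℤ) :
    ∑ k : Fin N, (ζ ^ s) ^ (k : ℕ) = if (N : ℤ) ∣ s then (N : K) else 0 := by
  rw [Fin.sum_univ_eq_sum_range (fun k => (ζ ^ s) ^ k)]
  split_ifs with hdvd
  · simp [(hζ.zpow_eq_one_iff_dvd s).2 hdvd]
  · have hne : ζ ^ s ≠ 1 := mt (hζ.zpow_eq_one_iff_dvd s).1 hdvd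
    have hpow : (ζ ^ s) ^ N = 1 := by
      rw [← zpow_natCast, zpow_comm, zpow_natCast, hζ.pow_eq_one, _root_.one_zpow]
    rw [geom_sum_eq hne, hpow, sub_self, zero_div]

theorem sum_fin_exp_two_pi_mul_I (N : ℕ) [NeZero N] (s : ℤ) :
    ∑ k : Fin N, exp (2 * (Real.pi : ℂ) * I * (s : ℂ) * ((k : ℕ) : ℂ) / (N : ℂ)) =
      if (N : ℤ) ∣ s then (N : ℂ) else 0 := by
  rw [← sum_fin_zpow_pow_of_isPrimitiveRoot (isPrimitiveRoot_exp N (NeZero.ne N)) s]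
  refine Finset.sum_congr rfl fun k _ => ?_
  rw [← exp_int_mul, ← exp_nat_mul]
  ring_nf

/-- The chirp `c(j) = exp(iπ j (j + (N mod 2)) / N)`, the quadratic phase of the DFnT matrix. It is
indexed by `ℤ` so that its periodicity modulo `N` can be stated. -/
noncomputable def chirp (N : ℕ) (j : ℤ) : ℂ :=
  exp ((Real.pi : ℂ) / N * I * ((j : ℂ) * ((j : ℂ) + ((N % 2 : ℕ) : ℂ))))

/-- The diagonal matrix `C = diag(c(0), …, c(N - 1))` of chirp values. -/
noncomputable def chirpMatrix (N : ℕ) : Matrix (Fin N) (Fin N) ℂ :=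
  diagonal fun k : Fin N => chirp N ((k : ℕ) : ℤ)

theorem chirp_ne_zero (N : ℕ) (j : ℤ) : chirp N j ≠ 0 := exp_ne_zero _

theorem star_chirp (N : ℕ) (j : ℤ) : star (chirp N j) = (chirp N j)⁻¹ := by
  simp [chirp, ← exp_conj, ← exp_neg]

theorem chirp_periodic (N : ℕ) [NeZero N] : Function.Periodic (chirp N) (N : ℤ) := by
  intro j
  obtain ⟨r, hr⟩ : Even (N + N % 2) := by grind
  have hr' : ((N % 2 : ℕ) : ℂ) = r + r - N := by
    rw [← Nat.cast_add, ← hr, Nat.cast_add, add_sub_cancel_left]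
  rw [chirp, chirp, exp_eq_exp_iff_exists_int]
  refine ⟨j + r, ?_⟩
  have hN : (N : ℂ) ≠ 0 := NeZero.ne _
  rw [hr']
  push_cast
  field_simp
  ring

theorem chirp_eq_alphaCoef_mul_exp_mul_chirp_sub (N : ℕ) (q j : ℤ) :
    chirp N j =
      alphaCoef N q * exp (2 * (Real.pi : ℂ) * I * (q : ℂ) * (j : ℂ) / (N : ℂ)) *
        chirp N (j - q) := by
  rw [chirp, chirp, alphaCoef, ← exp_add, ← exp_add]
  push_cast
  ring_nf

theorem chirpMatrix_mul_conjTranspose (N : ℕ) : chirpMatrix N * (chirpMatrix N)ᴴ = 1 := by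
  rw [chirpMatrix, diagonal_conjTranspose, diagonal_mul_diagonal, ← diagonal_one]
  congr! with k
  rw [Pi.star_apply, star_chirp, mul_inv_cancel₀ (chirp_ne_zero N _)]

theorem chirpMatrix_mul_Pzpow (N : ℕ) [NeZero N] (q : ℤ) :
    chirpMatrix N * Pzpow N q = alphaCoef N q • (Dzpow N q * Pzpow N q) * chirpMatrix N := by
  ext m n
  simp only [chirpMatrix, Dzpow, Pzpow, diagonal_mul, mul_diagonal, Matrix.smul_apply,
    of_apply, smul_eq_mul]
  split_ifs with hmn
  · obtain ⟨t, ht⟩ := Int.dvd_of_emod_eq_zero hmn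
    have hshift : chirp N (((m : ℕ) : ℤ) - q) = chirp N ((n : ℕ) : ℤ) := by
      rw [← (chirp_periodic N).int_mul t ((n : ℕ) : ℤ)]
      congr 1
      linear_combination ht
    rw [chirp_eq_alphaCoef_mul_exp_mul_chirp_sub N q, hshift, mul_one, mul_one, Int.cast_natCast]
  · simp only [mul_zero, zero_mul]

theorem star_dfnt_apply (N : ℕ) (n k : Fin N) :
    star (dfnt N n k) = 1 / (Real.sqrt N : ℂ) *
      exp (-(-((Real.pi : ℂ) / 4) * I + (Real.pi : ℂ) / N * I *
        (((n : ℕ) : ℂ) - ((k : ℕ) : ℂ) + ((N % 2 : ℕ) : ℂ) / 2) ^ 2)) := by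
  simp only [dfnt, of_apply, star_def, map_mul, map_div₀, map_one, conj_ofReal, ← exp_conj,
    map_add, map_neg, map_pow, map_sub, conj_I, conj_natCast, map_ofNat]
  ring_nf

theorem dfnt_apply_mul_star_dfnt_apply (N : ℕ) (m n k : Fin N) :
    dfnt N m k * star (dfnt N n k) =
      1 / (N : ℂ) * (chirp N ((m : ℕ) : ℤ) * star (chirp N ((n : ℕ) : ℤ))) *
        exp (2 * (Real.pi : ℂ) * I * (((n : ℕ) : ℂ) - ((m : ℕ) : ℂ)) * ((k : ℕ) : ℂ) /
          (N : ℂ)) := by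
  have hsqrt : 1 / (Real.sqrt N : ℂ) * (1 / (Real.sqrt N : ℂ)) = 1 / (N : ℂ) := by
    rw [div_mul_div_comm, one_mul, ← ofReal_mul, Real.mul_self_sqrt N.cast_nonneg, ofReal_natCast]
  rw [star_dfnt_apply, dfnt, of_apply, mul_mul_mul_comm, hsqrt, mul_assoc (1 / (N : ℂ)), star_chirp,
    chirp, chirp, ← exp_neg, ← exp_add, ← exp_add, ← exp_add]
  push_cast
  ring_nf

theorem dfnt_mul_Dzpow_mul_conjTranspose (N : ℕ) [NeZero N] (q : ℤ) :
    dfnt N * Dzpow N q * (dfnt N)ᴴ = chirpMatrix N * Pzpow N q * (chirpMatrix N)ᴴ := by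
  ext m n
  set s : ℤ := q + n - m with hs
  have hterm (k : Fin N) : (dfnt N * Dzpow N q) m k * (dfnt N)ᴴ k n =
      1 / (N : ℂ) * (chirp N ((m : ℕ) : ℤ) * star (chirp N ((n : ℕ) : ℤ))) *
        exp (2 * (Real.pi : ℂ) * I * (s : ℂ) * ((k : ℕ) : ℂ) / (N : ℂ)) := by
    rw [Dzpow, mul_diagonal, conjTranspose_apply, mul_right_comm, dfnt_apply_mul_star_dfnt_apply,
      mul_assoc, ← exp_add, hs]
    push_cast
    ring_nf
  have hdvd : (N : ℤ) ∣ s ↔ (((m : ℕ) : ℤ) - ((n : ℕ) : ℤ) - q) % (N : ℤ) = 0 := by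
    rw [← Int.dvd_iff_emod_eq_zero, ← dvd_neg, hs]
    ring_nf
  have hN : (N : ℂ) ≠ 0 := NeZero.ne _
  rw [mul_apply, Finset.sum_congr rfl fun k _ => hterm k, ← Finset.mul_sum,
    sum_fin_exp_two_pi_mul_I]
  simp only [hdvd, chirpMatrix, Pzpow, diagonal_conjTranspose, diagonal_mul, mul_diagonal, of_apply,
    Pi.star_apply]
  split_ifs
  · field_simp
  · simp only [mul_zero, zero_mul]

/-- The chirp–permutation identity `Φ_N D_N^q Φ_N^H = α_q D_N^q Π_N^q` for every integer `q`. -/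
theorem dfnt_chirp_permutation (N : ℕ) (hN : 0 < N) (q : ℤ) :
    dfnt N * Dzpow N q * (dfnt N)ᴴ = alphaCoef N q • (Dzpow N q * Pzpow N q) := by
  have : NeZero N := ⟨hN.ne'⟩
  calc
    dfnt N * Dzpow N q * (dfnt N)ᴴ = chirpMatrix N * Pzpow N q * (chirpMatrix N)ᴴ :=
      dfnt_mul_Dzpow_mul_conjTranspose N q
    _ = alphaCoef N q • (Dzpow N q * Pzpow N q) * (chirpMatrix N * (chirpMatrix N)ᴴ) := by
      rw [chirpMatrix_mul_Pzpow, Matrix.mul_assoc]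
    _ = alphaCoef N q • (Dzpow N q * Pzpow N q) := by
      rw [chirpMatrix_mul_conjTranspose, Matrix.mul_one]
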